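/- arXiv:2504.05723 — 3 statements merged into one kernel-verified Lean document; each statement's English description precedes it below -/
import Mathlib

section
/- Let W be an hpd n×n complex matrix, let A, H_R be n×n complex matrices and H_L an invertible n×n complex matrix, and set H := H_R H_L. Then FOV^W(H_L A H_R) = FOV^{H_Lᴴ W H_L}(A H), i.e., the W-field of values of H_L A H_R equals the (H_Lᴴ W H_L)-field of values of A H_R H_L. -/
open Polynomial Matrix
open scoped ComplexOrder

/-- The `W`-field of values of a matrix `B`:
`FOV^W(B) = { ⟨Bz, z⟩_W / ⟨z, z⟩_W : z ≠ 0 }` where `⟨u, v⟩_W = vᴴ W u`. -/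
def fovW {n : ℕ} (W B : Matrix (Fin n) (Fin n) ℂ) : Set ℂ :=
  {c : ℂ | ∃ z : Fin n → ℂ, z ≠ 0 ∧
    c = (star z ⬝ᵥ (W *ᵥ (B *ᵥ z))) / (star z ⬝ᵥ (W *ᵥ z))}

theorem star_dotProduct_conjTranspose_mul_mul_mulVec {m n R : Type*} [Fintype m] [Fintype n]
    [NonUnitalSemiring R] [StarRing R] (W : Matrix m m R) (S : Matrix m n R) (y v : n → R) :
    star y ⬝ᵥ ((Sᴴ * W * S) *ᵥ v) = star (S *ᵥ y) ⬝ᵥ (W *ᵥ (S *ᵥ v)) := by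
  simp only [star_mulVec, ← dotProduct_mulVec, mulVec_mulVec, Matrix.mul_assoc]

-- The substitution `z = S *ᵥ y` permutes the nonzero vectors and preserves the quotients.
theorem fov_weighted_eq_general {n : ℕ} (W : Matrix (Fin n) (Fin n) ℂ)
    {S B C : Matrix (Fin n) (Fin n) ℂ} (hS : IsUnit S) (hSBC : SemiconjBy S B C) :
    fovW W C = fovW (Sᴴ * W * S) B := by
  have mulVec_ne_zero_iff (y : Fin n → ℂ) : S *ᵥ y ≠ 0 ↔ y ≠ 0 := by
    simpa only [mulVec_zero] using (mulVec_injective_iff_isUnit.mpr hS).ne_iff (x := y) (y := 0)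
  have mulVec_intertwines (y : Fin n → ℂ) : C *ᵥ (S *ᵥ y) = S *ᵥ (B *ᵥ y) := by
    rw [mulVec_mulVec, mulVec_mulVec, hSBC.eq]
  ext c
  refine (mulVec_surjective_iff_isUnit.mpr hS).exists.trans (exists_congr fun y ↦ ?_)
  rw [mulVec_ne_zero_iff, mulVec_intertwines, star_dotProduct_conjTranspose_mul_mul_mulVec,
    star_dotProduct_conjTranspose_mul_mul_mulVec]

/-- For hpd `W` and invertible `HL`, with `H := HR * HL`,
`FOV^W(HL A HR) = FOV^{HLᴴ W HL}(A H)`. -/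
theorem fov_weighted_eq {n : ℕ}
    (W A HR HL : Matrix (Fin n) (Fin n) ℂ)
    (hW : W.PosDef) (hHL : IsUnit HL.det) :
    fovW W (HL * A * HR) = fovW (HLᴴ * W * HL) (A * (HR * HL)) := by
  exact fov_weighted_eq_general W ((isUnit_iff_isUnit_det HL).mpr hHL)
    (by simp only [SemiconjBy, Matrix.mul_assoc])
end

section
/- Let A be an n×n complex matrix, H a Hermitian n×n complex matrix, and Z ∈ ℂ^{n×m} such that, setting Y := HAZ, the matrix YᴴAZ is invertible. Then the deflation projector P_D := I − AZ(YᴴAZ)⁻¹Yᴴ is self-adjoint with respect to the H-inner product: H P_D = P_Dᴴ H. -/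
open Matrix

/-!
Put `B = A Z`, so that `Y = H B`. The matrix `Yᴴ A Z = Bᴴ H B` is Hermitian, hence so is its
inverse `W`, and therefore so is `H P_D = H - Y W Yᴴ`. As `H` is Hermitian, `(H P_D)ᴴ = P_Dᴴ H`.
-/

section

variable {n m k R : Type*} [Fintype n]

theorem isHermitian_mul_iff_mul_eq_conjTranspose_mul [NonUnitalSemiring R] [StarRing R]
    {H P : Matrix n n R} (hH : H.IsHermitian) :
    (H * P).IsHermitian ↔ H * P = Pᴴ * H := by
  rw [IsHermitian, conjTranspose_mul, hH.eq, eq_comm]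

variable [Fintype m] [DecidableEq n] [Ring R] [StarRing R]

theorem isHermitian_mul_one_sub_mul_mul_conjTranspose {H : Matrix n n R} {W : Matrix m m R}
    (B : Matrix n m R) (hH : H.IsHermitian) (hW : W.IsHermitian) :
    (H * (1 - B * W * (H * B)ᴴ)).IsHermitian := by
  have expand : H * (1 - B * W * (H * B)ᴴ) = H - H * B * W * (H * B)ᴴ := by
    simp only [Matrix.mul_sub, Matrix.mul_one, Matrix.mul_assoc]
  rw [expand]
  exact hH.sub (isHermitian_mul_mul_conjTranspose (H * B) hW)

-- `⅟` replaces the determinant-based `⁻¹`, which requires commutative scalars.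
theorem deflation_projector_H_selfadjoint_general [Fintype k] [DecidableEq m]
    (A : Matrix n k R) (H : Matrix n n R) (Z : Matrix k m R) (hH : H.IsHermitian)
    (Y : Matrix n m R) (hY : Y = H * A * Z) [Invertible (Yᴴ * A * Z)]
    (PD : Matrix n n R) (hPD : PD = 1 - A * Z * ⅟(Yᴴ * A * Z) * Yᴴ) :
    H * PD = PDᴴ * H := by
  have hY' : Y = H * (A * Z) := hY.trans (Matrix.mul_assoc H A Z)
  have gram_eq : Yᴴ * A * Z = (A * Z)ᴴ * H * (A * Z) := by
    rw [hY', conjTranspose_mul, hH.eq, Matrix.mul_assoc _ A Z]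
  have gram_isHermitian : (Yᴴ * A * Z).IsHermitian :=
    gram_eq ▸ isHermitian_conjTranspose_mul_mul (A * Z) hH
  have mul_isHermitian : (H * PD).IsHermitian := by
    have := isHermitian_mul_one_sub_mul_mul_conjTranspose (A * Z) hH
      gram_isHermitian.isSelfAdjoint.invOf.isHermitian
    rwa [← hY', ← hPD] at this
  exact (isHermitian_mul_iff_mul_eq_conjTranspose_mul hH).mp mul_isHermitian

end

/-- For Hermitian `H` and `Y := H A Z` with `Yᴴ A Z` invertible, the
deflation projector `P_D = I − A Z (Yᴴ A Z)⁻¹ Yᴴ` is self-adjoint with respect to the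
`H`-inner product: `H P_D = P_Dᴴ H`. -/
theorem deflation_projector_H_selfadjoint {n m : ℕ}
    (A H : Matrix (Fin n) (Fin n) ℂ) (Z : Matrix (Fin n) (Fin m) ℂ)
    (hH : H.IsHermitian)
    (Y : Matrix (Fin n) (Fin m) ℂ) (hY : Y = H * A * Z)
    (hinv : IsUnit (Yᴴ * A * Z).det)
    (PD : Matrix (Fin n) (Fin n) ℂ)
    (hPD : PD = 1 - A * Z * (Yᴴ * A * Z)⁻¹ * Yᴴ) :
    H * PD = PDᴴ * H := by
  let _ := invertibleOfIsUnitDet (Yᴴ * A * Z) hinv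
  exact deflation_projector_H_selfadjoint_general A H Z hH Y hY PD (by rwa [invOf_eq_nonsing_inv])
end

section
/- Let A be a positive definite n×n complex matrix, H an hpd n×n complex matrix, and Z ∈ ℂ^{n×m} of full column rank (m ≤ n). Set Y := HAZ. Then YᴴAZ = ZᴴAᴴHAZ is hpd (in particular invertible), and YᴴH⁻¹Z = ZᴴAᴴZ is invertible. -/
open Matrix
open scoped ComplexOrder

section HermitianPart

variable {n m 𝕜 : Type*} [Field 𝕜] [StarRing 𝕜]

/-- The Hermitian part `(A + Aᴴ) / 2` of a square matrix. The matrices called positive definite in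
the paper, which need not be Hermitian, are those for which `(hermitianPart A).PosDef`. -/
def hermitianPart (A : Matrix n n 𝕜) : Matrix n n 𝕜 :=
  (1 / 2 : 𝕜) • (A + Aᴴ)

theorem hermitianPart_conjTranspose (A : Matrix n n 𝕜) : hermitianPart Aᴴ = hermitianPart A := by
  rw [hermitianPart, hermitianPart, conjTranspose_conjTranspose, add_comm]

variable [Fintype n]

theorem hermitianPart_conjTranspose_mul_mul_same (A : Matrix n n 𝕜) (Z : Matrix n m 𝕜) :
    hermitianPart (Zᴴ * A * Z) = Zᴴ * hermitianPart A * Z := by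
  simp only [hermitianPart, conjTranspose_mul, conjTranspose_conjTranspose, Matrix.mul_smul,
    Matrix.smul_mul, Matrix.mul_add, Matrix.add_mul, Matrix.mul_assoc]

theorem star_dotProduct_hermitianPart_mulVec (A : Matrix n n 𝕜) (x : n → 𝕜) :
    star x ⬝ᵥ hermitianPart A *ᵥ x =
      1 / 2 * (star x ⬝ᵥ A *ᵥ x + star (star x ⬝ᵥ A *ᵥ x)) := by
  have adjoint_form : star x ⬝ᵥ Aᴴ *ᵥ x = star (star x ⬝ᵥ A *ᵥ x) := by
    rw [dotProduct_mulVec, ← star_mulVec, star_dotProduct]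
  rw [hermitianPart, smul_mulVec, add_mulVec, dotProduct_smul, dotProduct_add, adjoint_form,
    smul_eq_mul]

variable [PartialOrder 𝕜] {A : Matrix n n 𝕜}

theorem mulVec_injective_of_posDef_hermitianPart (hA : (hermitianPart A).PosDef) :
    Function.Injective A.mulVec := by
  refine (injective_iff_map_eq_zero A.mulVecLin).2 fun x (hx : A *ᵥ x = 0) ↦ ?_
  by_contra x_ne_zero
  have form_pos := hA.dotProduct_mulVec_pos x_ne_zero
  simp [star_dotProduct_hermitianPart_mulVec, hx] at form_pos

theorem isUnit_det_of_posDef_hermitianPart [DecidableEq n] (hA : (hermitianPart A).PosDef) :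
    IsUnit A.det :=
  (isUnit_iff_isUnit_det A).1 <|
    mulVec_injective_iff_isUnit.1 <| mulVec_injective_of_posDef_hermitianPart hA

theorem posDef_hermitianPart_conjTranspose_mul_mul_same [Fintype m] {Z : Matrix n m 𝕜}
    (hA : (hermitianPart A).PosDef) (hZ : Function.Injective Z.mulVec) :
    (hermitianPart (Zᴴ * A * Z)).PosDef := by
  rw [hermitianPart_conjTranspose_mul_mul_same]
  exact hA.conjTranspose_mul_mul_same hZ

theorem deflation_nonbreakdown_conditions_general [Fintype m] [DecidableEq n] [DecidableEq m]
    {H : Matrix n n 𝕜} {Y Z : Matrix n m 𝕜} (hA : (hermitianPart A).PosDef) (hH : H.PosDef)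
    (hZ : Function.Injective Z.mulVec) (hY : Y = H * A * Z) :
    Yᴴ * A * Z = Zᴴ * Aᴴ * H * A * Z ∧
    (Yᴴ * A * Z).PosDef ∧
    Yᴴ * H⁻¹ * Z = Zᴴ * Aᴴ * Z ∧
    IsUnit (Zᴴ * Aᴴ * Z).det := by
  have conjTranspose_Y : Yᴴ = Zᴴ * Aᴴ * H := by
    rw [hY, conjTranspose_mul, conjTranspose_mul, hH.isHermitian.eq, Matrix.mul_assoc]
  have AZ_injective : Function.Injective (A * Z).mulVec := by
    simpa only [Function.comp_def, mulVec_mulVec] using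
      (mulVec_injective_of_posDef_hermitianPart hA).comp hZ
  have det_H_isUnit : IsUnit H.det := (isUnit_iff_isUnit_det H).1 hH.isUnit
  refine ⟨by rw [conjTranspose_Y], ?_, ?_, ?_⟩
  · have congruence : Yᴴ * A * Z = (A * Z)ᴴ * H * (A * Z) := by
      rw [conjTranspose_Y, conjTranspose_mul, Matrix.mul_assoc _ A Z]
    exact congruence ▸ hH.conjTranspose_mul_mul_same AZ_injective
  · rw [conjTranspose_Y, mul_nonsing_inv_cancel_right _ _ det_H_isUnit]
  · exact isUnit_det_of_posDef_hermitianPart <|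
      posDef_hermitianPart_conjTranspose_mul_mul_same (hermitianPart_conjTranspose A ▸ hA) hZ

end HermitianPart

/-- If `A` is positive definite (its Hermitian part is hpd), `H` is hpd,
`Z` has full column rank, and `Y := H A Z`, then `Yᴴ A Z = Zᴴ Aᴴ H A Z` is hpd (in
particular invertible) and `Yᴴ H⁻¹ Z = Zᴴ Aᴴ Z` is invertible. -/
theorem deflation_nonbreakdown_conditions {n m : ℕ}
    (A H : Matrix (Fin n) (Fin n) ℂ) (Z : Matrix (Fin n) (Fin m) ℂ)
    (hA : Matrix.PosDef ((1 / 2 : ℂ) • (A + Aᴴ))) (hH : H.PosDef)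
    (hZ : ∀ v : Fin m → ℂ, Z *ᵥ v = 0 → v = 0) (hmn : m ≤ n)
    (Y : Matrix (Fin n) (Fin m) ℂ) (hY : Y = H * A * Z) :
    Yᴴ * A * Z = Zᴴ * Aᴴ * H * A * Z ∧
    Matrix.PosDef (Yᴴ * A * Z) ∧
    Yᴴ * H⁻¹ * Z = Zᴴ * Aᴴ * Z ∧
    IsUnit (Zᴴ * Aᴴ * Z).det :=
  deflation_nonbreakdown_conditions_general hA hH
    ((injective_iff_map_eq_zero Z.mulVecLin).2 hZ) hY
end
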